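/- Let S_{η,d} = ⋃_{i=0}^{d/2} B_{⌈lg η⌉, i} be the set of bounded adaptive multi-counters with at most d/2 components and total bit-length at most ⌈lg η⌉. If d = 2·δ·lg η for a constant δ > 0 (with lg η and δ·lg η integers), then |S_{η,d}| = Θ( η^{lg(δ+1) + lg(e_δ) + 1} / √(log η) ), where e_δ = (1 + 1/δ)^δ. -/

import Mathlib

/-- `SCounters g D = ⋃_{i=0}^{D} B_{g,i}`: bounded adaptive multi-counters with at most
`D` components (tuples of finite binary strings) and total bit-length at most `g`. -/
def SCounters (g D : ℕ) : Set (List (List Bool)) :=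
  {t | t.length ≤ D ∧ (t.map List.length).sum ≤ g}

namespace SizeS

def phi (b : Bool) : List (List Bool) → List (List Bool)
  | [] => []
  | s :: t => (b :: s) :: t

lemma S_succ (g D : ℕ) : SCounters (g+1) (D+1) =
    (List.cons [] '' SCounters (g+1) D) ∪
      (phi true '' SCounters g (D+1) ∪ phi false '' SCounters g (D+1)) := by
  ext t
  constructor
  · rintro ⟨h1, h2⟩
    rcases t with _ | ⟨_ | ⟨b, s⟩, t⟩
    · exact Or.inr (Or.inl ⟨[], by simp [SCounters], rfl⟩)
    · refine Or.inl ⟨t, ⟨?_, ?_⟩, rfl⟩ <;> simp at h1 h2 <;> omega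
    · have : (s :: t) ∈ SCounters g (D+1) := by
        constructor <;> simp at h1 h2 ⊢ <;> omega
      cases b
      · exact Or.inr (Or.inr ⟨s :: t, this, rfl⟩)
      · exact Or.inr (Or.inl ⟨s :: t, this, rfl⟩)
  · rintro (⟨t, ⟨h1, h2⟩, rfl⟩ | ⟨t, ⟨h1, h2⟩, rfl⟩ | ⟨t, ⟨h1, h2⟩, rfl⟩)
    · constructor <;> simp <;> omega
    all_goals
      rcases t with _ | ⟨s, t⟩
      · simp [SCounters, phi]
      · constructor <;> simp [phi] at h1 h2 ⊢ <;> omega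

lemma S_zero_right (g : ℕ) : SCounters g 0 = {[]} := by
  ext t
  simp only [SCounters, Set.mem_setOf_eq, Set.mem_singleton_iff]
  constructor
  · rintro ⟨h, -⟩
    exact List.length_eq_zero_iff.1 (by omega)
  · rintro rfl; simp

lemma S_zero_left (D : ℕ) : SCounters 0 (D+1) = insert [] (List.cons [] '' SCounters 0 D) := by
  ext t
  constructor
  · rintro ⟨h1, h2⟩
    rcases t with _ | ⟨_ | ⟨b, s⟩, t⟩
    · exact Or.inl rfl
    · refine Or.inr ⟨t, ⟨?_, ?_⟩, rfl⟩
      · simp at h1; omega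
      · simpa using h2
    · simp at h2
  · rintro (rfl | ⟨t, ⟨h1, h2⟩, rfl⟩)
    · simp [SCounters]
    · constructor
      · simp; omega
      · simpa using h2

lemma S_fin (g D : ℕ) : (SCounters g D).Finite := by
  induction g generalizing D with
  | zero =>
    induction D with
    | zero => rw [S_zero_right]; exact Set.finite_singleton _
    | succ D ih => rw [S_zero_left]; exact (ih.image _).insert _
  | succ g ihg =>
    induction D with
    | zero => rw [S_zero_right]; exact Set.finite_singleton _
    | succ D ih =>
      rw [S_succ]
      exact (ih.image _).union (((ihg _).image _).union ((ihg _).image _))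

lemma upper (g D : ℕ) : (SCounters g D).ncard ≤ 2 ^ g * (g + D + 1).choose D := by
  induction g generalizing D with
  | zero =>
    induction D with
    | zero => rw [S_zero_right]; simp
    | succ D ih =>
      rw [S_zero_left]
      have h1 := Set.ncard_insert_le ([] : List (List Bool)) (List.cons [] '' SCounters 0 D)
      have h2 := Set.ncard_image_le (f := List.cons []) (S_fin 0 D)
      have e : ∀ D : ℕ, (0 + D + 1).choose D = D + 1 := by intro D; simp
      rw [e] at ih ⊢
      simp at ih ⊢
      omega
  | succ g ihg =>
    induction D with
    | zero => rw [S_zero_right]; simp; exact Nat.one_le_two_pow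
    | succ D ih =>
      rw [S_succ]
      have h1 := Set.ncard_union_le (List.cons [] '' SCounters (g+1) D)
        (phi true '' SCounters g (D+1) ∪ phi false '' SCounters g (D+1))
      have h2 := Set.ncard_union_le (phi true '' SCounters g (D+1)) (phi false '' SCounters g (D+1))
      have h3 := Set.ncard_image_le (f := List.cons []) (S_fin (g+1) D)
      have h4 := Set.ncard_image_le (f := phi true) (S_fin g (D+1))
      have h5 := Set.ncard_image_le (f := phi false) (S_fin g (D+1))
      have h6 := ihg (D+1)
      have e : (g + 1 + (D + 1) + 1).choose (D+1) =
        (g + 1 + D + 1).choose D + (g + (D+1) + 1).choose (D+1) := by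
        rw [show g + 1 + (D+1) + 1 = (g + 1 + D + 1) + 1 by ring, Nat.choose_succ_succ,
          show g + 1 + D + 1 = g + (D + 1) + 1 by ring]
      rw [e, mul_add]
      have : 2 ^ (g+1) * (g + (D+1) + 1).choose (D+1)
        = 2 * (2 ^ g * (g + (D+1) + 1).choose (D+1)) := by ring
      omega

def E (g D : ℕ) : Set (List (List Bool)) :=
  {t | t.length = D ∧ (t.map List.length).sum = g}

lemma E_sub (g D : ℕ) : E g D ⊆ SCounters g D := fun _ h => ⟨h.1.le, h.2.le⟩

lemma E_fin (g D : ℕ) : (E g D).Finite := (S_fin g D).subset (E_sub g D)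

lemma E_succ (g D : ℕ) : (List.cons [] '' E (g+1) D) ∪
      (phi true '' E g (D+1) ∪ phi false '' E g (D+1)) ⊆ E (g+1) (D+1) := by
  rintro _ (⟨t, ⟨h1, h2⟩, rfl⟩ | ⟨t, ⟨h1, h2⟩, rfl⟩ | ⟨t, ⟨h1, h2⟩, rfl⟩)
  · constructor <;> simp <;> omega
  all_goals
    rcases t with _ | ⟨s, t⟩
    · simp at h1
    · constructor <;> simp [phi] at h1 h2 ⊢ <;> omega

lemma phi_inj (b : Bool) (g D : ℕ) : Set.InjOn (phi b) (E g (D+1)) := by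
  rintro (_ | ⟨s, t⟩) h (_ | ⟨s', t'⟩) h' hh
  · rfl
  · simp [E] at h
  · simp [E] at h'
  · simpa [phi] using hh

lemma E_card (g D : ℕ) : (E (g+1) D).ncard + 2 * (E g (D+1)).ncard ≤ (E (g+1) (D+1)).ncard := by
  have h := Set.ncard_le_ncard (E_succ g D) (E_fin _ _)
  rw [Set.ncard_union_eq ?_ ((E_fin _ _).image _) (((E_fin _ _).image _).union ((E_fin _ _).image _)),
    Set.ncard_union_eq ?_ ((E_fin _ _).image _) ((E_fin _ _).image _),
    (phi_inj _ _ _).ncard_image, (phi_inj _ _ _).ncard_image, Set.ncard_image_of_injective] at h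
  · omega
  · exact List.cons_injective
  · rw [Set.disjoint_left]
    rintro _ ⟨t, ht, rfl⟩ ⟨t', ht', h⟩
    rcases t with _ | ⟨s, t⟩
    · simp [E] at ht
    rcases t' with _ | ⟨s', t'⟩
    · simp [E] at ht'
    simp [phi] at h
  · rw [Set.disjoint_left]
    rintro _ ⟨t, ht, rfl⟩ (⟨t', ht', h⟩ | ⟨t', ht', h⟩) <;>
    · rcases t' with _ | ⟨s', t'⟩
      · simp [E] at ht'
      simp [phi] at h

lemma lower (g D : ℕ) : 2 ^ g * (g + D).choose D ≤ (E g (D+1)).ncard := by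
  induction g generalizing D with
  | zero =>
    simp only [pow_zero, zero_add, Nat.choose_self, mul_one]
    refine (Set.ncard_pos (E_fin _ _)).2 ?_
    exact ⟨List.replicate (D+1) [], by simp, by simp⟩
  | succ g ihg =>
    induction D with
    | zero =>
      have := E_card g 0
      have := ihg 0
      simp [pow_succ] at *
      omega
    | succ D ih =>
      have h1 := E_card g (D+1)
      have h2 := ihg (D+1)
      have e : (g + 1 + (D + 1)).choose (D+1) =
        (g + 1 + D).choose D + (g + (D+1)).choose (D+1) := by
        rw [show g + 1 + (D+1) = (g + 1 + D) + 1 by ring, Nat.choose_succ_succ,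
          show g + 1 + D = g + (D + 1) by ring]
      rw [e, mul_add]
      have : 2 ^ (g+1) * (g + (D+1)).choose (D+1)
        = 2 * (2 ^ g * (g + (D+1)).choose (D+1)) := by ring
      omega

lemma fact_lower (n : ℕ) : √(n:ℝ) * (n / Real.exp 1) ^ n ≤ (n.factorial : ℝ) := by
  refine le_trans ?_ (Stirling.le_factorial_stirling n)
  gcongr
  have := Real.pi_gt_three
  have : (0:ℝ) ≤ n := by positivity
  nlinarith

lemma fact_upper (n : ℕ) (hn : 1 ≤ n) :
    (n.factorial : ℝ) ≤ Real.exp 1 * (√(n:ℝ) * (n / Real.exp 1) ^ n) := by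
  obtain ⟨m, rfl⟩ : ∃ m, n = m + 1 := ⟨n - 1, by omega⟩
  have h : Stirling.stirlingSeq (m+1) ≤ Stirling.stirlingSeq 1 :=
    Stirling.stirlingSeq'_antitone (Nat.zero_le m)
  rw [Stirling.stirlingSeq_one, Stirling.stirlingSeq, div_le_iff₀ (by positivity)] at h
  refine h.trans (le_of_eq ?_)
  rw [Real.sqrt_mul (by norm_num)]
  field_simp

/-- the main term -/
lemma main_term (δ : ℝ) (hδ : 0 < δ) (L D : ℕ) (hL : 1 ≤ L) (hD : (D:ℝ) = δ * L) :
    (√((L + D : ℕ):ℝ) * ((L + D : ℕ) / Real.exp 1) ^ (L + D)) =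
     (√((1 + δ)/δ) / √L * ((1+δ)^L * (1 + 1/δ)^D)) * 
      (√(L:ℝ) * (L / Real.exp 1) ^ L) * (√(D:ℝ) * (D / Real.exp 1) ^ D) := by
  have hL' : (0:ℝ) < L := by exact_mod_cast hL
  have e1 : √((L + D : ℕ):ℝ) = √((1 + δ)/δ) / √L * √(L:ℝ) * √(D:ℝ) := by
    rw [div_mul_cancel₀ _ (by positivity), ← Real.sqrt_mul (by positivity)]
    congr 1
    push_cast
    rw [hD]; field_simp
  have e2 : (((L + D : ℕ):ℝ) / Real.exp 1) ^ (L + D) = 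
      ((1+δ)^L * (1 + 1/δ)^D) * (L / Real.exp 1) ^ L * (D / Real.exp 1) ^ D := by
    have a : (((L + D : ℕ):ℝ) / Real.exp 1) = (1+δ) * (L / Real.exp 1) := by
      push_cast; rw [hD]; ring
    have b : (((L + D : ℕ):ℝ) / Real.exp 1) = (1+1/δ) * (D / Real.exp 1) := by
      push_cast; rw [hD]; field_simp; ring
    rw [pow_add]
    nth_rw 1 [a]
    rw [b, mul_pow, mul_pow]; ring
  rw [e1, e2]; ring

lemma eta_term (δ : ℝ) (hδ : 0 < δ) (L D : ℕ) (hD : (D:ℝ) = δ * L) :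
    (((2 ^ L : ℕ)) : ℝ) ^ (Real.logb 2 (δ + 1) + δ * Real.logb 2 (1 + 1 / δ) + 1) =
      (1+δ)^L * (1 + 1/δ)^D * 2 ^ L := by
  push_cast
  rw [← Real.rpow_natCast 2 L, ← Real.rpow_mul (by norm_num)]
  have : (L:ℝ) * (Real.logb 2 (δ + 1) + δ * Real.logb 2 (1 + 1 / δ) + 1) =
     Real.logb 2 (δ+1) * L + Real.logb 2 (1 + 1/δ) * D + L := by rw [hD]; ring
  rw [this, Real.rpow_add (by norm_num), Real.rpow_add (by norm_num), Real.rpow_mul (by norm_num),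
    Real.rpow_mul (by norm_num), Real.rpow_logb (by norm_num) (by norm_num) (by positivity),
    Real.rpow_logb (by norm_num) (by norm_num) (by positivity), Real.rpow_natCast,
    Real.rpow_natCast, add_comm δ 1]

lemma choose_bounds (δ : ℝ) (hδ : 0 < δ) (L D : ℕ) (hL : 1 ≤ L) (hD1 : 1 ≤ D)
    (hD : (D:ℝ) = δ * L) :
    (√((1 + δ)/δ) / √L * ((1+δ)^L * (1 + 1/δ)^D)) / (Real.exp 1)^2 ≤ ((L + D).choose D : ℝ) ∧
    ((L + D).choose D : ℝ) ≤ Real.exp 1 * (√((1 + δ)/δ) / √L * ((1+δ)^L * (1 + 1/δ)^D)) := by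
  have hm := main_term δ hδ L D hL hD
  have hL' : (0:ℝ) < L := by exact_mod_cast hL
  have hD' : (0:ℝ) < D := by exact_mod_cast hD1
  have hc : ((L + D).choose D : ℝ) * (L.factorial * D.factorial) = (L + D).factorial := by
    have := Nat.add_choose_mul_factorial_mul_factorial L D
    rw [← this]; push_cast; ring
  have l1 := fact_lower L
  have l2 := fact_lower D
  have l3 := fact_lower (L + D)
  have u1 := fact_upper L hL
  have u2 := fact_upper D hD1
  have u3 := fact_upper (L + D) (by omega)
  rw [hm] at l3 u3
  have p1 : 0 < √(L:ℝ) * (L / Real.exp 1) ^ L := by positivity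
  have p2 : 0 < √(D:ℝ) * (D / Real.exp 1) ^ D := by positivity
  have p3 : 0 < √((1 + δ)/δ) / √L * ((1+δ)^L * (1 + 1/δ)^D) := by positivity
  generalize √(L:ℝ) * (L / Real.exp 1) ^ L = x at *
  generalize √(D:ℝ) * (D / Real.exp 1) ^ D = y at *
  generalize √((1 + δ)/δ) / √L * ((1+δ)^L * (1 + 1/δ)^D) = z at *
  have pe := Real.exp_pos 1
  have hc0 : (0:ℝ) ≤ (L + D).choose D := by positivity
  constructor
  · rw [div_le_iff₀ (by positivity)]
    have : z * (x * y) ≤ ((L + D).choose D * Real.exp 1 ^ 2) * (x * y) := by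
      calc z * (x * y) = z * x * y := by ring
        _ ≤ _ := l3
        _ = _ := hc.symm
        _ ≤ ((L + D).choose D : ℝ) * ((Real.exp 1 * x) * (Real.exp 1 * y)) := by gcongr
        _ = _ := by ring
    exact le_of_mul_le_mul_right this (by positivity)
  · have : ((L + D).choose D : ℝ) * (x * y) ≤ (Real.exp 1 * z) * (x * y) := by
      calc ((L + D).choose D : ℝ) * (x * y) ≤ ((L + D).choose D : ℝ) * (L.factorial * D.factorial) := by
            gcongr
        _ = _ := hc
        _ ≤ _ := u3
        _ = _ := by ring
    exact le_of_mul_le_mul_right this (by positivity)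

end SizeS

open SizeS in
/-- If `d = 2·δ·lg η` for a constant `δ > 0` (with `lg η = L` and `δ·lg η = D = d/2`
integers, i.e. `η = 2^L`), then
`|S_{η,d}| = Θ( η^{lg(δ+1) + lg(e_δ) + 1} / √(log η) )`, where
`e_δ = (1 + 1/δ)^δ`, so that `lg(e_δ) = δ·lg(1 + 1/δ)`. -/
theorem size_S_theta (δ : ℝ) (hδ : 0 < δ) :
    ∃ c₁ c₂ : ℝ, 0 < c₁ ∧ 0 < c₂ ∧ ∃ N : ℕ, ∀ η L D : ℕ, N ≤ η →
      η = 2 ^ L → (D : ℝ) = δ * L →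
      c₁ * (η : ℝ) ^ (Real.logb 2 (δ + 1) + δ * Real.logb 2 (1 + 1 / δ) + 1)
          / Real.sqrt (Real.log η) ≤ ((SCounters L D).ncard : ℝ) ∧
      ((SCounters L D).ncard : ℝ) ≤
        c₂ * (η : ℝ) ^ (Real.logb 2 (δ + 1) + δ * Real.logb 2 (1 + 1 / δ) + 1)
          / Real.sqrt (Real.log η) := by
  have hlog : 0 < Real.log 2 := Real.log_pos (by norm_num)
  refine ⟨δ / (1 + δ) * √((1 + δ)/δ) * √(Real.log 2) / (Real.exp 1)^2,
    (1 + δ) * √((1 + δ)/δ) * √(Real.log 2) * Real.exp 1, by positivity, by positivity, 2, ?_⟩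
  rintro η L D hη rfl hD
  have hL : 1 ≤ L := by
    rcases L with _ | L
    · simp at hη
    · omega
  have hL' : (0:ℝ) < L := by exact_mod_cast hL
  have hD1 : 1 ≤ D := by
    have : (0:ℝ) < D := by rw [hD]; positivity
    exact_mod_cast this
  obtain ⟨b1, b2⟩ := choose_bounds δ hδ L D hL hD1 hD
  have hsq : √(Real.log ((2 ^ L : ℕ) : ℝ)) = √L * √(Real.log 2) := by
    push_cast
    rw [Real.log_pow, Real.sqrt_mul (by positivity)]
  rw [eta_term δ hδ L D hD, hsq]
  constructor
  · obtain ⟨m, rfl⟩ : ∃ m, D = m + 1 := ⟨D - 1, by omega⟩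
    have h1 := (lower L m).trans (Set.ncard_le_ncard (E_sub L (m+1)) (S_fin _ _))
    have h2 : ((2:ℝ) ^ L * ((L + m).choose m : ℝ)) ≤ (SCounters L (m+1)).ncard := by
      exact_mod_cast h1
    refine le_trans ?_ h2
    have h3 : ((L + m).choose m : ℝ) = δ / (1 + δ) * (L + (m+1)).choose (m+1) := by
      have := Nat.add_one_mul_choose_eq (L + m) m
      have h4 : ((L:ℝ) + m + 1) * (L + m).choose m = (L + (m+1)).choose (m+1) * (m+1) := by
        exact_mod_cast this
      push_cast at hD
      have h5 : ((L:ℝ) + m + 1) = (1 + δ) * L := by linarith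
      rw [h5, hD] at h4
      field_simp
      have h6 : (L:ℝ) * ((1 + δ) * (L + m).choose m) = L * (δ * (L + (m+1)).choose (m+1)) := by
        linarith
      have := mul_left_cancel₀ hL'.ne' h6
      linarith
    rw [h3]
    calc _ = 2 ^ L * (δ / (1 + δ) * ((√((1 + δ)/δ) / √L * ((1+δ)^L * (1 + 1/δ)^(m+1))) / (Real.exp 1)^2)) := by
          field_simp
      _ ≤ _ := by gcongr
  · have h1 := upper L D
    have h2 : ((SCounters L D).ncard : ℝ) ≤ (2:ℝ) ^ L * ((L + D + 1).choose D : ℝ) := by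
      exact_mod_cast h1
    refine le_trans h2 ?_
    have h3 : ((L + D + 1).choose D : ℝ) ≤ (1 + δ) * (L + D).choose D := by
      have := Nat.choose_mul_succ_eq (L + D) D
      rw [show L + D + 1 - D = L + 1 by omega] at this
      have h4 : ((L + D).choose D : ℝ) * (L + D + 1) = (L + D + 1).choose D * (L + 1) := by
        exact_mod_cast this
      have hc0 : (0:ℝ) ≤ (L + D).choose D := by positivity
      have h5 : ((L:ℝ) + D + 1) ≤ (1 + δ) * (L + 1) := by rw [hD]; nlinarith
      refine le_of_mul_le_mul_right (a := (L:ℝ) + 1) ?_ (by positivity)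
      rw [← h4]
      nlinarith
    calc _ ≤ (2:ℝ) ^ L * ((1 + δ) * (Real.exp 1 * (√((1 + δ)/δ) / √L * ((1+δ)^L * (1 + 1/δ)^D)))) := by
          gcongr
          exact h3.trans (by gcongr)
      _ = _ := by field_simp
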